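/- The function ψ(x) = (1−x)·log(1−2x) + (1+x)·log(1+2x), defined on (−1/2, 1/2), is even (ψ(−x) = ψ(x)); moreover, ψ is monotonically decreasing on (0, 1/2) and satisfies ψ(x) < 0 for every x ∈ (0, 1/2). -/

import Mathlib

/-- The function `ψ(x) = (1−x)·log(1−2x) + (1+x)·log(1+2x)` on `(−1/2, 1/2)`. -/
noncomputable def psi (x : ℝ) : ℝ :=
  (1 - x) * Real.log (1 - 2 * x) + (1 + x) * Real.log (1 + 2 * x)

lemma psi_hasDerivAt (x : ℝ) (h1 : 0 < 1 - 2 * x) (h2 : 0 < 1 + 2 * x) :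
    HasDerivAt psi (Real.log (1 + 2 * x) - Real.log (1 - 2 * x)
      - 2 * (2 * x) / ((1 - 2 * x) * (1 + 2 * x))) x := by
  have hx := hasDerivAt_id' x
  have a := (hx.const_sub 1).mul (((hx.const_mul 2).const_sub 1).log h1.ne')
  have b := (hx.const_add 1).mul (((hx.const_mul 2).const_add 1).log h2.ne')
  have c := a.add b
  refine HasDerivAt.congr_deriv (f := psi) c ?_
  have := h1.ne'
  have := h2.ne'
  field_simp
  ring

lemma psi_strictAntiOn : StrictAntiOn psi (Set.Ico (0 : ℝ) (1 / 2)) := by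
  apply strictAntiOn_of_deriv_neg (convex_Ico _ _)
  · intro x hx
    exact (psi_hasDerivAt x (by linarith [hx.2]) (by linarith [hx.1])).continuousAt.continuousWithinAt
  · intro x hx
    rw [interior_Ico] at hx
    have h1 : 0 < 1 - 2 * x := by linarith [hx.2]
    have h2 : 0 < 1 + 2 * x := by linarith [hx.1]
    rw [(psi_hasDerivAt x h1 h2).deriv, ← Real.log_div h2.ne' h1.ne']
    have hy : 1 < (1 + 2 * x) / (1 - 2 * x) := by
      rw [lt_div_iff₀ h1]; linarith [hx.1]
    have h := Real.self_lt_sinh_iff.2 (Real.log_pos hy)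
    rw [Real.sinh_log (by positivity)] at h
    have e : ((1 + 2 * x) / (1 - 2 * x) - ((1 + 2 * x) / (1 - 2 * x))⁻¹) / 2
        = 2 * (2 * x) / ((1 - 2 * x) * (1 + 2 * x)) := by
      have := h1.ne'
      have := h2.ne'
      field_simp
      ring
    linarith

/-- `ψ` is even on `(−1/2, 1/2)`, monotonically decreasing on `(0, 1/2)`,
and negative on `(0, 1/2)`. -/
theorem stmt_13 :
    (∀ x ∈ Set.Ioo (-(1 / 2) : ℝ) (1 / 2), psi (-x) = psi x) ∧
    StrictAntiOn psi (Set.Ioo (0 : ℝ) (1 / 2)) ∧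
    (∀ x ∈ Set.Ioo (0 : ℝ) (1 / 2), psi x < 0) := by
  refine ⟨fun x _ => ?_, psi_strictAntiOn.mono Set.Ioo_subset_Ico_self, fun x hx => ?_⟩
  · unfold psi
    rw [show 1 - 2 * -x = 1 + 2 * x by ring, show 1 + 2 * -x = 1 - 2 * x by ring]
    ring
  · have h := psi_strictAntiOn (Set.left_mem_Ico.2 (by norm_num)) (Set.Ioo_subset_Ico_self hx) hx.1
    have h0 : psi 0 = 0 := by simp [psi]
    rwa [h0] at h
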